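/- Let μ be a non-degenerate probability measure compactly supported on [−1,1] with α'(0) = 0 (i.e. μ has mean zero), let v ≥ 2 be an integer, and assume either v is even or μ is stochastically non-negative. Define H_{θ,0}(x) := θ x^v − γ(β(x)) for x ∈ cl(N) (with value −∞ where γ(β(x)) = ∞). Then there exists θ_c ∈ (0, ∞) such that: for every θ with 0 ≤ θ < θ_c, the unique global maximizer of H_{θ,0} on cl(N) is x = 0; and for every θ > θ_c, x = 0 is not a global maximizer of H_{θ,0} on cl(N). -/

import Mathlib

/-!
Write `α` for the log moment generating function and `I = γ ∘ β` for the extended rate function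
`gb`. Everything rests on the one-sided Legendre inequality `θ t - α(θ) ≤ I(t)`, valid for every
`θ` and every real `t` (`legendre_le_gb`): for `t = α'(u)` it is the tangent-line inequality of the
convex function `α` (`cgf_tangent`), and off `N` it is `e^{θ t} μ{t} ≤ ∫ e^{θ x} dμ`. Hoeffding's
lemma gives `α(θ) ≤ θ² / 2`, so the choice `θ = t` yields `t² / 2 ≤ I(t)` (`sq_le_gb`), while
`I(0) = 0`.

Let `S` be the set of `θ` with `θ x^v ≤ I(x)` on `cl(N)`, that is, those for which `0` is a global
maximizer, and put `θ_c = sup S`. Since `N ⊆ [-1, 1]`, the quadratic bound gives `1/2 ∈ S`. As `μ` is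
not a point mass, `α(1) > 0`, hence `N` contains some `t > 0` by the mean value theorem; there
`I(t) < ∞`, so `S` is bounded above. For `0 ≤ θ < θ_c` choose `θ' ∈ S` with `θ < θ'`: where
`x^v > 0` one has `θ x^v < θ' x^v ≤ I(x)`, and where `x^v ≤ 0` and `x ≠ 0` one has
`θ x^v ≤ 0 < x² / 2 ≤ I(x)`.
-/

open MeasureTheory Filter Set
open scoped ENNReal NNReal

noncomputable section

namespace GibbsMulti

/-- The log moment generating function `α(θ) = log ∫ e^{θx} dμ(x)`. -/
def cgf (μ : Measure ℝ) (θ : ℝ) : ℝ := Real.log (∫ x, Real.exp (θ * x) ∂μ)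

/-- `α'`, the derivative of the log-mgf. -/
def cgf' (μ : Measure ℝ) : ℝ → ℝ := deriv (cgf μ)

/-- `N = α'(ℝ)`. -/
def Ndom (μ : Measure ℝ) : Set ℝ := Set.range (cgf' μ)

/-- `β`, the inverse of `α'` on `N`. -/
def betaInv (μ : Measure ℝ) : ℝ → ℝ := Function.invFun (cgf' μ)

/-- `γ(θ) = θ α'(θ) − α(θ)`. -/
def gammaFn (μ : Measure ℝ) (θ : ℝ) : ℝ := θ * cgf' μ θ - cgf μ θ

open Classical in
/-- The extended function `γ∘β : cl(N) → [0,∞]`, with values `D(δ_t‖μ) = −log μ({t})`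
at the endpoints of `N` (which is `∞` when `μ({t}) = 0`). -/
def gb (μ : Measure ℝ) (t : ℝ) : ℝ≥0∞ :=
  if t ∈ Ndom μ then ENNReal.ofReal (gammaFn μ (betaInv μ t))
  else if μ {t} = 0 then ⊤ else ENNReal.ofReal (- Real.log (μ {t}).toReal)

/-- `μ` is non-degenerate. -/
def Nondeg (μ : Measure ℝ) : Prop := ∀ c : ℝ, μ ≠ Measure.dirac c

/-- Tail condition with (finite) exponent `p`: `E_μ[exp(λ |X|^p)] < ∞` for every `λ > 0`. -/
def TailCond (μ : Measure ℝ) (p : ℝ) : Prop :=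
  ∀ l : ℝ, 0 < l → Integrable (fun x => Real.exp (l * |x| ^ p)) μ

/-- `μ` is stochastically non-negative. -/
def StochNonneg (μ : Measure ℝ) : Prop :=
  ∀ t : ℝ, 0 < t → -t ∈ Ndom μ →
    t ∈ Ndom μ ∧ gammaFn μ (betaInv μ t) ≤ gammaFn μ (betaInv μ (-t))

/-- `H_{θ,B}(x) = θ x^v + Bx − γ(β(x))`, with value `−∞` where `γ(β(x)) = ∞`. -/
def HFn (μ : Measure ℝ) (v : ℕ) (θ B : ℝ) (x : ℝ) : EReal :=
  ((θ * x ^ v + B * x : ℝ) : EReal) - ((gb μ x : ℝ≥0∞) : EReal)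

/-! ### The log moment generating function -/

lemma integrable_exp (μ : Measure ℝ) [IsProbabilityMeasure μ]
    (hsupp : ∀ᵐ x ∂μ, x ∈ Icc (-1 : ℝ) 1) (θ : ℝ) :
    Integrable (fun x => Real.exp (θ * x)) μ :=
  ProbabilityTheory.integrable_exp_mul_of_mem_Icc (X := fun x => x) aemeasurable_id hsupp

lemma mgf_pos (μ : Measure ℝ) [IsProbabilityMeasure μ]
    (hsupp : ∀ᵐ x ∂μ, x ∈ Icc (-1 : ℝ) 1) (θ : ℝ) : 0 < ∫ x, Real.exp (θ * x) ∂μ :=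
  integral_exp_pos (integrable_exp μ hsupp θ)

lemma cgf_eq (μ : Measure ℝ) : cgf μ = ProbabilityTheory.cgf (fun x => x) μ := rfl

lemma mem_interior_integrableExpSet (μ : Measure ℝ) [IsProbabilityMeasure μ]
    (hsupp : ∀ᵐ x ∂μ, x ∈ Icc (-1 : ℝ) 1) (θ : ℝ) :
    θ ∈ interior (ProbabilityTheory.integrableExpSet (fun x : ℝ => x) μ) := by
  have h : ProbabilityTheory.integrableExpSet (fun x : ℝ => x) μ = univ :=
    eq_univ_of_forall fun t => integrable_exp μ hsupp t
  simp [h]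

lemma differentiable_cgf (μ : Measure ℝ) [IsProbabilityMeasure μ]
    (hsupp : ∀ᵐ x ∂μ, x ∈ Icc (-1 : ℝ) 1) : Differentiable ℝ (cgf μ) := fun θ =>
  (ProbabilityTheory.analyticAt_cgf (mem_interior_integrableExpSet μ hsupp θ)).differentiableAt

lemma integrable_mul_exp (μ : Measure ℝ) [IsProbabilityMeasure μ]
    (hsupp : ∀ᵐ x ∂μ, x ∈ Icc (-1 : ℝ) 1) (θ : ℝ) :
    Integrable (fun x => x * Real.exp (θ * x)) μ := by
  refine (integrable_exp μ hsupp θ).mono' (by fun_prop) ?_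
  filter_upwards [hsupp] with x hx
  rw [norm_mul, Real.norm_eq_abs, Real.norm_eq_abs, Real.abs_exp]
  exact mul_le_of_le_one_left (Real.exp_pos _).le (abs_le.2 hx)

/-- `α'(θ) ∫ e^{θx} dμ = ∫ x e^{θx} dμ`: the derivative of `α` is the mean of the tilted measure. -/
lemma cgf'_mul_mgf (μ : Measure ℝ) [IsProbabilityMeasure μ]
    (hsupp : ∀ᵐ x ∂μ, x ∈ Icc (-1 : ℝ) 1) (θ : ℝ) :
    cgf' μ θ * ∫ x, Real.exp (θ * x) ∂μ = ∫ x, x * Real.exp (θ * x) ∂μ := by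
  have h := ProbabilityTheory.deriv_cgf (mem_interior_integrableExpSet μ hsupp θ)
  rw [cgf', cgf_eq, h]
  exact div_mul_cancel₀ _ (mgf_pos μ hsupp θ).ne'

lemma abs_cgf'_le (μ : Measure ℝ) [IsProbabilityMeasure μ]
    (hsupp : ∀ᵐ x ∂μ, x ∈ Icc (-1 : ℝ) 1) (θ : ℝ) : cgf' μ θ ∈ Icc (-1 : ℝ) 1 := by
  have hM := mgf_pos μ hsupp θ
  have hi := integrable_exp μ hsupp θ
  have hi' := integrable_mul_exp μ hsupp θ
  have h := cgf'_mul_mgf μ hsupp θ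
  constructor
  · refine le_of_mul_le_mul_right ?_ hM
    rw [h, ← integral_const_mul]
    refine integral_mono_ae (hi.const_mul _) hi' ?_
    filter_upwards [hsupp] with x hx
    exact mul_le_mul_of_nonneg_right hx.1 (Real.exp_pos _).le
  · refine le_of_mul_le_mul_right ?_ hM
    rw [h, ← integral_const_mul]
    refine integral_mono_ae hi' (hi.const_mul _) ?_
    filter_upwards [hsupp] with x hx
    exact mul_le_mul_of_nonneg_right hx.2 (Real.exp_pos _).le

lemma closure_Ndom_subset (μ : Measure ℝ) [IsProbabilityMeasure μ]
    (hsupp : ∀ᵐ x ∂μ, x ∈ Icc (-1 : ℝ) 1) : closure (Ndom μ) ⊆ Icc (-1 : ℝ) 1 :=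
  closure_minimal (range_subset_iff.2 (abs_cgf'_le μ hsupp)) isClosed_Icc

/-- The graph of `α` lies above its tangent lines. With `m = α'(u)`, this is the inequality
`e^{(s-u)x} ≥ e^{(s-u)m} (1 + (s-u)(x-m))` integrated against `e^{ux} dμ`. -/
lemma cgf_tangent (μ : Measure ℝ) [IsProbabilityMeasure μ]
    (hsupp : ∀ᵐ x ∂μ, x ∈ Icc (-1 : ℝ) 1) (s u : ℝ) :
    cgf μ u + (s - u) * cgf' μ u ≤ cgf μ s := by
  set m := cgf' μ u with hm
  have hi := integrable_exp μ hsupp u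
  have hi' := integrable_mul_exp μ hsupp u
  have key : Real.exp ((s - u) * m) * ∫ x, Real.exp (u * x) ∂μ ≤ ∫ x, Real.exp (s * x) ∂μ := by
    have e : Real.exp ((s - u) * m) * ∫ x, Real.exp (u * x) ∂μ =
        ∫ x, (Real.exp ((s - u) * m) * (1 - (s - u) * m) * Real.exp (u * x) +
          Real.exp ((s - u) * m) * (s - u) * (x * Real.exp (u * x))) ∂μ := by
      rw [integral_add (hi.const_mul _) (hi'.const_mul _), integral_const_mul,
        integral_const_mul, ← cgf'_mul_mgf μ hsupp u]
      ring
    rw [e]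
    refine integral_mono ((hi.const_mul _).add (hi'.const_mul _)) (integrable_exp μ hsupp s) ?_
    intro x
    have h1 : Real.exp (s * x) =
        Real.exp ((s - u) * m) * Real.exp (u * x) * Real.exp ((s - u) * (x - m)) := by
      rw [← Real.exp_add, ← Real.exp_add]; ring_nf
    have h2 := Real.add_one_le_exp ((s - u) * (x - m))
    have h3 := mul_le_mul_of_nonneg_left h2
      (mul_pos (Real.exp_pos ((s - u) * m)) (Real.exp_pos (u * x))).le
    simp only
    rw [h1]
    linarith
  have h := Real.log_le_log (mul_pos (Real.exp_pos _) (mgf_pos μ hsupp u)) key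
  rw [Real.log_mul (Real.exp_pos _).ne' (mgf_pos μ hsupp u).ne', Real.log_exp] at h
  unfold cgf
  linarith

lemma cgf_zero (μ : Measure ℝ) [IsProbabilityMeasure μ] : cgf μ 0 = 0 := by
  simp [cgf]

lemma integral_id_eq_zero (μ : Measure ℝ) [IsProbabilityMeasure μ]
    (hsupp : ∀ᵐ x ∂μ, x ∈ Icc (-1 : ℝ) 1) (hmean : cgf' μ 0 = 0) : ∫ x, x ∂μ = 0 := by
  have h := cgf'_mul_mgf μ hsupp 0
  rw [hmean] at h
  simpa using h.symm

/-- Hoeffding's lemma. -/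
lemma cgf_le_sq (μ : Measure ℝ) [IsProbabilityMeasure μ]
    (hsupp : ∀ᵐ x ∂μ, x ∈ Icc (-1 : ℝ) 1) (hmean : cgf' μ 0 = 0) (θ : ℝ) :
    cgf μ θ ≤ θ ^ 2 / 2 := by
  have h := (ProbabilityTheory.hasSubgaussianMGF_of_mem_Icc_of_integral_eq_zero
    (X := fun x : ℝ => x) aemeasurable_id hsupp (integral_id_eq_zero μ hsupp hmean)).cgf_le θ
  rw [cgf_eq]
  norm_num at h
  exact h

/-- `α(1) > 0`, because equality in `e^x ≥ 1 + x` almost everywhere would make `μ` the point mass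
at `0`. -/
lemma cgf_one_pos (μ : Measure ℝ) [IsProbabilityMeasure μ] (hND : Nondeg μ)
    (hsupp : ∀ᵐ x ∂μ, x ∈ Icc (-1 : ℝ) 1) (hmean : cgf' μ 0 = 0) : 0 < cgf μ 1 := by
  have hi : Integrable (fun x => Real.exp x) μ := by simpa using integrable_exp μ hsupp 1
  have hx : Integrable (fun x : ℝ => x) μ := by simpa using integrable_mul_exp μ hsupp 0
  have hnn : ∀ x : ℝ, 0 ≤ Real.exp x - (x + 1) := fun x => sub_nonneg.2 (Real.add_one_le_exp x)
  have hx1 : Integrable (fun x : ℝ => x + 1) μ := hx.add (integrable_const 1)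
  have hint : Integrable (fun x => Real.exp x - (x + 1)) μ := hi.sub hx1
  have hval : ∫ x, (Real.exp x - (x + 1)) ∂μ = (∫ x, Real.exp x ∂μ) - 1 := by
    rw [integral_sub hi hx1, integral_add hx (integrable_const 1),
      integral_id_eq_zero μ hsupp hmean]
    simp
  have hpos : 0 < ∫ x, (Real.exp x - (x + 1)) ∂μ := by
    refine (integral_nonneg hnn).lt_of_ne fun h0 => hND 0 ?_
    have hae := (integral_eq_zero_iff_of_nonneg hnn hint).1 h0.symm
    have hz : ∀ᵐ x ∂μ, x = 0 := by
      filter_upwards [hae] with x hx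
      by_contra hne
      have := Real.add_one_lt_exp hne
      simp only [Pi.zero_apply] at hx
      linarith
    have h1 : μ = μ.map id := Measure.map_id.symm
    rw [h1, Measure.map_congr (f := id) (g := fun _ => (0 : ℝ)) hz, Measure.map_const]
    simp
  unfold cgf
  simp only [one_mul]
  exact Real.log_pos (by linarith)

/-! ### The rate function -/

lemma cgf'_betaInv (μ : Measure ℝ) {t : ℝ} (ht : t ∈ Ndom μ) : cgf' μ (betaInv μ t) = t :=
  Function.invFun_eq ht

/-- One half of Legendre duality: the tangent-line inequality on `N`, and off `N` the bound of
`∫ e^{θx} dμ` from below by the contribution of the atom at `t`, if there is one. -/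
lemma legendre_le_gb (μ : Measure ℝ) [IsProbabilityMeasure μ]
    (hsupp : ∀ᵐ x ∂μ, x ∈ Icc (-1 : ℝ) 1) (θ t : ℝ) :
    ENNReal.ofReal (θ * t - cgf μ θ) ≤ gb μ t := by
  unfold gb
  split_ifs with h1 h2
  · refine ENNReal.ofReal_le_ofReal ?_
    have h := cgf_tangent μ hsupp θ (betaInv μ t)
    rw [gammaFn, cgf'_betaInv μ h1]
    rw [cgf'_betaInv μ h1] at h
    linarith
  · exact le_top
  · refine ENNReal.ofReal_le_ofReal ?_
    have hp : 0 < (μ {t}).toReal := ENNReal.toReal_pos h2 (measure_ne_top _ _)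
    have hle : Real.exp (θ * t) * (μ {t}).toReal ≤ ∫ x, Real.exp (θ * x) ∂μ := by
      have h := setIntegral_le_integral (s := {t}) (integrable_exp μ hsupp θ)
        (Eventually.of_forall fun x => (Real.exp_pos _).le)
      rw [integral_singleton] at h
      simpa [Measure.real, mul_comm] using h
    have h := Real.log_le_log (mul_pos (Real.exp_pos _) hp) hle
    rw [Real.log_mul (Real.exp_pos _).ne' hp.ne', Real.log_exp] at h
    unfold cgf
    linarith

lemma sq_le_gb (μ : Measure ℝ) [IsProbabilityMeasure μ]
    (hsupp : ∀ᵐ x ∂μ, x ∈ Icc (-1 : ℝ) 1) (hmean : cgf' μ 0 = 0) (t : ℝ) :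
    ENNReal.ofReal (t ^ 2 / 2) ≤ gb μ t := by
  refine le_trans (ENNReal.ofReal_le_ofReal ?_) (legendre_le_gb μ hsupp t t)
  have := cgf_le_sq μ hsupp hmean t
  linarith

lemma gb_zero (μ : Measure ℝ) [IsProbabilityMeasure μ]
    (hsupp : ∀ᵐ x ∂μ, x ∈ Icc (-1 : ℝ) 1) (hmean : cgf' μ 0 = 0) : gb μ 0 = 0 := by
  have h0 : (0 : ℝ) ∈ Ndom μ := ⟨0, hmean⟩
  rw [gb, if_pos h0, gammaFn, cgf'_betaInv μ h0]
  have h := cgf_tangent μ hsupp (betaInv μ 0) 0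
  rw [hmean, cgf_zero] at h
  exact ENNReal.ofReal_of_nonpos (by linarith)

/-! ### Values of `H` -/

lemma HFn_zero (μ : Measure ℝ) [IsProbabilityMeasure μ]
    (hsupp : ∀ᵐ x ∂μ, x ∈ Icc (-1 : ℝ) 1) (hmean : cgf' μ 0 = 0)
    {v : ℕ} (hv : 2 ≤ v) (θ : ℝ) : HFn μ v θ 0 0 = 0 := by
  have : v ≠ 0 := by omega
  simp [HFn, gb_zero μ hsupp hmean, this]

lemma HFn_of_top (μ : Measure ℝ) {v : ℕ} {θ x : ℝ} (h : gb μ x = ⊤) :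
    HFn μ v θ 0 x = ⊥ := by
  simp [HFn, h]

lemma HFn_of_ne_top (μ : Measure ℝ) {v : ℕ} {θ x : ℝ} (h : gb μ x ≠ ⊤) :
    HFn μ v θ 0 x = ((θ * x ^ v - (gb μ x).toReal : ℝ) : EReal) := by
  rw [HFn, ← EReal.coe_ennreal_toReal h]
  norm_cast
  simp

/-- phase transition: for a mean-zero `μ` compactly supported on
`[−1,1]`, with either `v` even or `μ` stochastically non-negative, there is a critical
`θ_c ∈ (0,∞)` such that for `0 ≤ θ < θ_c` the unique global maximizer of `H_{θ,0}` on
`cl(N)` is `x = 0`, while for `θ > θ_c` the point `x = 0` is not a global maximizer. -/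
theorem statement19
    (μ : Measure ℝ) [IsProbabilityMeasure μ] (hND : Nondeg μ)
    (hsupp : ∀ᵐ x ∂μ, x ∈ Icc (-1 : ℝ) 1)
    (hmean : cgf' μ 0 = 0)
    (v : ℕ) (hv : 2 ≤ v)
    (hvsn : Even v ∨ StochNonneg μ) :
    ∃ θc : ℝ, 0 < θc ∧
      (∀ θ : ℝ, 0 ≤ θ → θ < θc →
        (∀ x ∈ closure (Ndom μ), HFn μ v θ 0 x ≤ HFn μ v θ 0 0) ∧
        (∀ x ∈ closure (Ndom μ), x ≠ 0 → HFn μ v θ 0 x < HFn μ v θ 0 0)) ∧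
      (∀ θ : ℝ, θc < θ →
        ¬ (∀ x ∈ closure (Ndom μ), HFn μ v θ 0 x ≤ HFn μ v θ 0 0)) := by
  have H0 : ∀ θ, HFn μ v θ 0 0 = 0 := HFn_zero μ hsupp hmean hv
  have hquad : ∀ x, gb μ x ≠ ⊤ → x ^ 2 / 2 ≤ (gb μ x).toReal := fun x hx =>
    (ENNReal.ofReal_le_iff_le_toReal hx).1 (sq_le_gb μ hsupp hmean x)
  -- the parameters for which `0` is a global maximizer
  let S : Set ℝ := {θ | ∀ x ∈ closure (Ndom μ), HFn μ v θ 0 x ≤ HFn μ v θ 0 0}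
  have hhalf : (1 / 2 : ℝ) ∈ S := by
    intro x hx
    rw [H0]
    by_cases ht : gb μ x = ⊤
    · simp [HFn_of_top μ ht]
    rw [HFn_of_ne_top μ ht]
    have hx1 : |x| ≤ 1 := abs_le.2 (closure_Ndom_subset μ hsupp hx)
    have hxv : x ^ v ≤ x ^ 2 := calc
      x ^ v ≤ |x| ^ v := (le_abs_self _).trans_eq (abs_pow x v)
      _ ≤ |x| ^ 2 := pow_le_pow_of_le_one (abs_nonneg x) hx1 hv
      _ = x ^ 2 := sq_abs x
    have := hquad x ht
    exact_mod_cast (by linarith : 1 / 2 * x ^ v - (gb μ x).toReal ≤ 0)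
  have hbdd : BddAbove S := by
    obtain ⟨c, -, hc⟩ := exists_deriv_eq_slope (cgf μ) one_pos
      (differentiable_cgf μ hsupp).continuous.continuousOn
      (differentiable_cgf μ hsupp).differentiableOn
    have htpos : 0 < cgf' μ c := by
      rw [cgf', hc, cgf_zero]
      simpa using cgf_one_pos μ hND hsupp hmean
    have htN : cgf' μ c ∈ Ndom μ := ⟨c, rfl⟩
    have hfin : gb μ (cgf' μ c) ≠ ⊤ := by
      rw [gb, if_pos htN]; exact ENNReal.ofReal_ne_top
    refine ⟨(gb μ (cgf' μ c)).toReal / cgf' μ c ^ v, fun θ hθ => ?_⟩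
    have h := hθ _ (subset_closure htN)
    rw [H0, HFn_of_ne_top μ hfin] at h
    have h' : θ * cgf' μ c ^ v - (gb μ (cgf' μ c)).toReal ≤ 0 := by exact_mod_cast h
    rw [le_div_iff₀ (pow_pos htpos v)]
    linarith
  have hstrict : ∀ θ : ℝ, 0 ≤ θ → θ < sSup S →
      ∀ x ∈ closure (Ndom μ), x ≠ 0 → HFn μ v θ 0 x < HFn μ v θ 0 0 := by
    intro θ hθ0 hθ x hx hx0
    obtain ⟨θ', hθ'S, hθ'⟩ := exists_lt_of_lt_csSup ⟨_, hhalf⟩ hθ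
    have h := hθ'S x hx
    rw [H0] at h ⊢
    by_cases ht : gb μ x = ⊤
    · rw [HFn_of_top μ ht]; exact EReal.bot_lt_zero
    rw [HFn_of_ne_top μ ht] at h ⊢
    have h' : θ' * x ^ v - (gb μ x).toReal ≤ 0 := by exact_mod_cast h
    suffices hs : θ * x ^ v - (gb μ x).toReal < 0 by exact_mod_cast hs
    rcases le_or_gt (x ^ v) 0 with hneg | hpos
    · have h1 := mul_nonpos_of_nonneg_of_nonpos hθ0 hneg
      have h2 := hquad x ht
      have h3 : 0 < x ^ 2 := by positivity
      linarith
    · have := mul_lt_mul_of_pos_right hθ' hpos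
      linarith
  refine ⟨sSup S, ?_, fun θ hθ0 hθ => ⟨fun x hx => ?_, hstrict θ hθ0 hθ⟩,
    fun θ hθ hall => (le_csSup hbdd (show θ ∈ S from hall)).not_gt hθ⟩
  · exact lt_of_lt_of_le (by norm_num) (le_csSup hbdd hhalf)
  · rcases eq_or_ne x 0 with rfl | hx0
    · exact le_rfl
    · exact (hstrict θ hθ0 hθ x hx hx0).le

end GibbsMulti
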